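/- Assume |x·g'(x)| ≤ C₂|g(x)| and |x·f'(x)| ≤ C₃ for all x ≤ −3/2. Let h : ℝ → ℝ be smooth with h, 1/h, h' and h'' bounded and with |x·h'(x)| ≤ C₆ and |x²·h''(x)| ≤ C₇ for x ≤ −3/2, and let V : ℝ → (Hermitian 4×4 complex matrices) be C¹ with V bounded and |x·V'(x)| ≤ C₈ for x ≤ −3/2. Define, on Schwartz functions, Hu = h·H₀(hu) + Vu and the operator Bu = h·[H₀, A₋](hu) + i·h·H₀(R₋h'·u) + i·R₋h'·H₀(hu) + i·R₋V'·u, where [H₀, A₋] denotes the explicit commutator [H₀, A₋]v = −i(Γ¹R₋'Dv − (i/2)Γ¹R₋''v − λR₋g'Γ²v − R₋f'v). Then B coincides with the commutator [H, A₋] on Schwartz functions, and there exists a constant c > 0, uniform in λ ≥ 1, such that for every u in the Schwartz space 𝒮(ℝ, ℂ⁴): ‖Bu‖ ≤ c(‖H₀u‖ + ‖u‖). -/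

import Mathlib

noncomputable section

open MeasureTheory

abbrev V4 : Type := EuclideanSpace ℂ (Fin 4)

/-- A `4 × 4` complex matrix acting on `ℂ⁴` as a continuous linear map. -/
def Mop (A : Matrix (Fin 4) (Fin 4) ℂ) : V4 →L[ℂ] V4 := Matrix.toEuclideanCLM (𝕜 := ℂ) A

/-- The `L²` inner product `⟨u, v⟩ = ∫ ⟨u(x), v(x)⟩ dx` (conjugate-linear in the first slot). -/
def L2inner (u v : ℝ → V4) : ℂ := ∫ x : ℝ, (inner ℂ (u x) (v x) : ℂ)

/-- The `L²` norm `‖u‖ = (∫ ‖u(x)‖² dx)^{1/2}`. -/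
def L2norm (u : ℝ → V4) : ℝ := Real.sqrt (∫ x : ℝ, ‖u x‖ ^ 2)

/-- The operator `D = −i d/dx`. -/
def Dop (u : ℝ → V4) : ℝ → V4 := fun x => (-Complex.I) • deriv u x

/-- The per-mode free Dirac Hamiltonian `H₀u = Γ¹Du + λgΓ²u + fu`. -/
def H0op (Γ1 Γ2 : Matrix (Fin 4) (Fin 4) ℂ) (g f : ℝ → ℝ) (lam : ℝ) (u : ℝ → V4) : ℝ → V4 :=
  fun x => Mop Γ1 (Dop u x) + (lam * g x) • Mop Γ2 (u x) + f x • u x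

/-- The operator `Qu = −u'' + λ²g²u`. -/
def Qop (g : ℝ → ℝ) (lam : ℝ) (u : ℝ → V4) : ℝ → V4 :=
  fun x => -(deriv (deriv u) x) + (lam ^ 2 * g x ^ 2) • u x

/-- The comparison operator `Nu = Qu + (1 + x²)u`. -/
def Nop (g : ℝ → ℝ) (lam : ℝ) (u : ℝ → V4) : ℝ → V4 :=
  fun x => Qop g lam u x + (1 + x ^ 2) • u x

/-- The coefficient `R₋(x) = j₋(x/S)² · x` of the conjugate operator at the double horizon. -/
def Rm (jm : ℝ → ℝ) (S : ℝ) (x : ℝ) : ℝ := (jm (x / S)) ^ 2 * x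

/-- The conjugate operator at the double horizon, `A₋u = R₋Du − (i/2)R₋'u = ½{R₋, D}u`. -/
def Amop (jm : ℝ → ℝ) (S : ℝ) (u : ℝ → V4) : ℝ → V4 :=
  fun x => Rm jm S x • Dop u x - ((Complex.I / 2) * ((deriv (Rm jm S) x : ℝ) : ℂ)) • u x

/-- The commutator `[H₀, A₋] = −i(Γ¹R₋'D − (i/2)Γ¹R₋'' − λR₋g'Γ² − R₋f')` computed on
Schwartz functions. -/
def commH0Am (Γ1 Γ2 : Matrix (Fin 4) (Fin 4) ℂ) (g f : ℝ → ℝ) (lam : ℝ)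
    (jm : ℝ → ℝ) (S : ℝ) (u : ℝ → V4) : ℝ → V4 :=
  fun x =>
    (-Complex.I) •
      (deriv (Rm jm S) x • Mop Γ1 (Dop u x)
        - ((Complex.I / 2) * ((deriv (deriv (Rm jm S)) x : ℝ) : ℂ)) • Mop Γ1 (u x)
        - (lam * Rm jm S x * deriv g x) • Mop Γ2 (u x)
        - (Rm jm S x * deriv f x) • u x)

/-- The perturbed Hamiltonian `Hu = h·H₀(hu) + Vu`. -/
def Hop (Γ1 Γ2 : Matrix (Fin 4) (Fin 4) ℂ) (g f : ℝ → ℝ) (lam : ℝ) (h : ℝ → ℝ)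
    (V : ℝ → Matrix (Fin 4) (Fin 4) ℂ) (u : ℝ → V4) : ℝ → V4 :=
  fun x => h x • H0op Γ1 Γ2 g f lam (fun y => h y • u y) x + Mop (V x) (u x)

/-- The operator `Bu = h·[H₀, A₋](hu) + i·h·H₀(R₋h'·u) + i·R₋h'·H₀(hu) + i·R₋V'·u`. -/
def Bop (Γ1 Γ2 : Matrix (Fin 4) (Fin 4) ℂ) (g f : ℝ → ℝ) (lam : ℝ) (h : ℝ → ℝ)
    (V : ℝ → Matrix (Fin 4) (Fin 4) ℂ) (jm : ℝ → ℝ) (S : ℝ) (u : ℝ → V4) : ℝ → V4 :=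
  fun x =>
    h x • commH0Am Γ1 Γ2 g f lam jm S (fun y => h y • u y) x
      + (Complex.I * (h x : ℂ)) •
          H0op Γ1 Γ2 g f lam (fun y => (Rm jm S y * deriv h y) • u y) x
      + (Complex.I * ((Rm jm S x * deriv h x : ℝ) : ℂ)) •
          H0op Γ1 Γ2 g f lam (fun y => h y • u y) x
      + (Complex.I * ((Rm jm S x : ℝ) : ℂ)) • (deriv (fun y => Mop (V y)) x) (u x)

/-!
Substituting `Γ¹Du = H₀u − λgΓ²u − fu` into `[H₀, A₋]` and commuting the factors `h` and `R₋h'`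
through `H₀` puts `B` in a form without derivatives of `u`: multiples of `H₀u`, `λgu` and `u` whose
coefficients are bounded because `R₋` is supported in `x ≤ −3/2`, where `|R₋(x)| ≤ |x|`.

It remains to bound `‖λgu‖` by `‖H₀u‖ + ‖u‖` uniformly in `λ`. As `Γ¹` and `Γ²` anticommute, the
cross term of `‖Γ¹Du + λgΓ²u‖²` is `λg` times the derivative of `Re ⟨−iΓ¹u, Γ²u⟩`. Integrating by
parts moves the derivative onto `λg`, and `|λg'| ≤ C_g|λg|` then lets half of `‖λgu‖²` absorb it.
-/

theorem hasDerivAt_clm_apply {E : Type*} [NormedAddCommGroup E] [NormedSpace ℂ E] (T : E →L[ℂ] E)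
    {u : ℝ → E} {u' : E} {x : ℝ} (hu : HasDerivAt u u' x) :
    HasDerivAt (fun y => T (u y)) (T u') x :=
  (T.restrictScalars ℝ).hasFDerivAt.comp_hasDerivAt x hu

theorem hasDerivAt_clm_apply_apply {E : Type*} [NormedAddCommGroup E] [NormedSpace ℂ E]
    {T : ℝ → E →L[ℂ] E} {T' : E →L[ℂ] E} {u : ℝ → E} {u' : E} {x : ℝ} (hT : HasDerivAt T T' x)
    (hu : HasDerivAt u u' x) : HasDerivAt (fun y => T y (u y)) (T' (u x) + T x u') x :=
  ((ContinuousLinearMap.restrictScalarsL ℂ E E ℝ ℝ).hasFDerivAt.comp_hasDerivAt x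
    hT).clm_apply hu

theorem memLp_smul_of_abs_le {E : Type*} [NormedAddCommGroup E] [NormedSpace ℝ E] {φ : ℝ → ℝ}
    (hφ : Continuous φ) {M : ℝ} (hM : ∀ x, |φ x| ≤ M) {u : ℝ → E} (hu : MemLp u 2) :
    MemLp (fun x => φ x • u x) 2 :=
  hu.smul (memLp_top_of_bound hφ.aestronglyMeasurable M (.of_forall hM))

section Clifford

variable {E : Type*} [NormedAddCommGroup E] [InnerProductSpace ℂ E]

/-- The first-order operator `−iα d/dx + Gβ` of Dirac type on the line, for endomorphisms `α`, `β`
of the fibre and a scalar mass function `G`. -/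
def diracOp (α β : E →L[ℂ] E) (G : ℝ → ℝ) (u : ℝ → E) : ℝ → E :=
  fun x => α ((-Complex.I) • deriv u x) + G x • β (u x)

/-- The real bilinear form `Re ⟨−iαv, βw⟩`, the interaction of the two terms of `diracOp`. -/
def cliffordForm (α β : E →L[ℂ] E) (v w : E) : ℝ :=
  (inner ℂ (α ((-Complex.I) • v)) (β w)).re

theorem memLp_diracOp (α β : E →L[ℂ] E) {G : ℝ → ℝ} (hG : Continuous G) {M : ℝ}
    (hM : ∀ x, |G x| ≤ M) {u : ℝ → E} (hu : MemLp u 2) (hu' : MemLp (deriv u) 2) :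
    MemLp (diracOp α β G u) 2 :=
  (α.comp_memLp' (hu'.const_smul (-Complex.I))).add
    (memLp_smul_of_abs_le hG hM (β.comp_memLp' hu))

variable [CompleteSpace E]

/-- A pair of anticommuting self-adjoint involutions, that is, the generators of a representation
of the Clifford algebra of the Euclidean plane by self-adjoint operators. -/
structure IsCliffordPair (α β : E →L[ℂ] E) : Prop where
  isSelfAdjoint_left : IsSelfAdjoint α
  isSelfAdjoint_right : IsSelfAdjoint β
  mul_self_left : α * α = 1
  mul_self_right : β * β = 1
  anticomm : α * β + β * α = 0

theorem norm_apply_of_isSelfAdjoint_of_mul_self {T : E →L[ℂ] E} (hT : IsSelfAdjoint T)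
    (hsq : T * T = 1) (v : E) : ‖T v‖ = ‖v‖ :=
  ContinuousLinearMap.norm_map_of_mem_unitary
    (Unitary.mem_iff.2 ⟨by rw [hT.star_eq, hsq], by rw [hT.star_eq, hsq]⟩) v

namespace IsCliffordPair

variable {α β : E →L[ℂ] E} (hαβ : IsCliffordPair α β)

include hαβ

theorem norm_left_apply (v : E) : ‖α v‖ = ‖v‖ :=
  norm_apply_of_isSelfAdjoint_of_mul_self hαβ.isSelfAdjoint_left hαβ.mul_self_left v

theorem norm_right_apply (v : E) : ‖β v‖ = ‖v‖ :=
  norm_apply_of_isSelfAdjoint_of_mul_self hαβ.isSelfAdjoint_right hαβ.mul_self_right v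

theorem left_right_apply (v : E) : α (β v) = -β (α v) :=
  eq_neg_of_add_eq_zero_left (congrArg (fun T : E →L[ℂ] E => T v) hαβ.anticomm)

theorem cliffordForm_comm (v w : E) : cliffordForm α β v w = cliffordForm α β w v := by
  have hα : ∀ a b, inner ℂ (α a) b = inner ℂ a (α b) := hαβ.isSelfAdjoint_left.isSymmetric
  have hβ : ∀ a b, inner ℂ (β a) b = inner ℂ a (β b) := hαβ.isSelfAdjoint_right.isSymmetric
  have key : inner ℂ (α ((-Complex.I) • v)) (β w) = inner ℂ (β v) (α ((-Complex.I) • w)) := by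
    rw [hα, hαβ.left_right_apply, inner_neg_right, ← hβ]
    simp only [map_smul, inner_smul_left, inner_smul_right, map_neg, Complex.conj_I]
    ring
  rw [cliffordForm, cliffordForm, key]
  exact inner_re_symm (𝕜 := ℂ) _ _

theorem abs_cliffordForm_le (v w : E) : |cliffordForm α β v w| ≤ ‖v‖ * ‖w‖ := by
  calc |cliffordForm α β v w| ≤ ‖inner ℂ (α ((-Complex.I) • v)) (β w)‖ := Complex.abs_re_le_norm _
    _ ≤ ‖α ((-Complex.I) • v)‖ * ‖β w‖ := norm_inner_le_norm _ _
    _ = ‖v‖ * ‖w‖ := by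
      rw [hαβ.norm_left_apply, hαβ.norm_right_apply, norm_smul, norm_neg, Complex.norm_I, one_mul]

theorem norm_sq_diracOp (G : ℝ → ℝ) (u : ℝ → E) (x : ℝ) :
    ‖diracOp α β G u x‖ ^ 2 = ‖deriv u x‖ ^ 2 + ‖G x • u x‖ ^ 2 +
      G x * (2 * cliffordForm α β (deriv u x) (u x)) := by
  have hcross : (inner ℂ (α ((-Complex.I) • deriv u x)) (G x • β (u x))).re =
      G x * cliffordForm α β (deriv u x) (u x) := by
    rw [cliffordForm, inner_smul_right_eq_smul, Complex.real_smul, Complex.re_ofReal_mul]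
  rw [diracOp, @norm_add_sq ℂ, RCLike.re_to_complex, hcross, hαβ.norm_left_apply, norm_smul,
    norm_neg, Complex.norm_I, norm_smul, hαβ.norm_right_apply, norm_smul]
  ring

theorem hasDerivAt_cliffordForm_self {u : ℝ → E} (hu : Differentiable ℝ u) (x : ℝ) :
    HasDerivAt (fun y => cliffordForm α β (u y) (u y)) (2 * cliffordForm α β (deriv u x) (u x))
      x := by
  have hux : HasDerivAt u (deriv u x) x := (hu x).hasDerivAt
  have hinner := (hasDerivAt_clm_apply α (hux.const_smul (-Complex.I))).inner ℂ
    (hasDerivAt_clm_apply β hux)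
  refine (Complex.reCLM.hasFDerivAt.comp_hasDerivAt x hinner).congr_deriv ?_
  calc Complex.reCLM _ = cliffordForm α β (u x) (deriv u x) + cliffordForm α β (deriv u x) (u x) :=
        Complex.add_re _ _
    _ = 2 * cliffordForm α β (deriv u x) (u x) := by rw [hαβ.cliffordForm_comm (u x)]; ring

theorem integrable_mul_cliffordForm_self {φ : ℝ → ℝ} (hφ : Measurable φ) {M : ℝ}
    (hM : ∀ x, |φ x| ≤ M) {u : ℝ → E} (hu : Differentiable ℝ u) (hu₂ : MemLp u 2) :
    Integrable (fun x => φ x * cliffordForm α β (u x) (u x)) := by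
  have hcont : Continuous fun x => cliffordForm α β (u x) (u x) :=
    continuous_iff_continuousAt.2 fun x => (hαβ.hasDerivAt_cliffordForm_self hu x).continuousAt
  have hform : Integrable fun x => cliffordForm α β (u x) (u x) :=
    (hu₂.integrable_norm_pow two_ne_zero).mono' hcont.aestronglyMeasurable (.of_forall fun x =>
      (hαβ.abs_cliffordForm_le (u x) (u x)).trans_eq (sq _).symm)
  exact hform.bdd_mul hφ.aestronglyMeasurable (.of_forall hM)

variable {G : ℝ → ℝ} {M C : ℝ} (hM : ∀ x, |G x| ≤ M) (hC : ∀ x, |deriv G x| ≤ C * |G x|)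
  {u : ℝ → E} (hu : Differentiable ℝ u) (hu₂ : MemLp u 2)

include hM hC hu hu₂

theorem integrable_deriv_mul_cliffordForm_self :
    Integrable (fun x => deriv G x * cliffordForm α β (u x) (u x)) := by
  have hG' (x : ℝ) : |deriv G x| ≤ |C| * M :=
    (hC x).trans (mul_le_mul (le_abs_self C) (hM x) (abs_nonneg _) (abs_nonneg _))
  exact hαβ.integrable_mul_cliffordForm_self (measurable_deriv G) hG' hu hu₂

variable (hG : Differentiable ℝ G) (hu₂' : MemLp (deriv u) 2)

include hG hu₂'

theorem integral_norm_sq_diracOp :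
    ∫ x, ‖diracOp α β G u x‖ ^ 2 = (∫ x, ‖deriv u x‖ ^ 2) + (∫ x, ‖G x • u x‖ ^ 2) -
      ∫ x, deriv G x * cliffordForm α β (u x) (u x) := by
  have hu'_int := hu₂'.integrable_norm_pow two_ne_zero
  have hGu_int := (memLp_smul_of_abs_le hG.continuous hM hu₂).integrable_norm_pow two_ne_zero
  have hsum_int : Integrable fun x => ‖deriv u x‖ ^ 2 + ‖G x • u x‖ ^ 2 := hu'_int.add hGu_int
  have hcross_int : Integrable
      fun x => G x * (2 * cliffordForm α β (deriv u x) (u x)) := by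
    refine (((memLp_diracOp α β hG.continuous hM hu₂ hu₂').integrable_norm_pow two_ne_zero).sub
      hsum_int).congr (.of_forall fun x => ?_)
    simp only [Pi.sub_apply, hαβ.norm_sq_diracOp, add_sub_cancel_left]
  have hparts := integral_mul_deriv_eq_deriv_mul_of_integrable
    (fun x _ => (hG x).hasDerivAt) (fun x _ => hαβ.hasDerivAt_cliffordForm_self hu x) hcross_int
    (hαβ.integrable_deriv_mul_cliffordForm_self hM hC hu hu₂)
    (hαβ.integrable_mul_cliffordForm_self hG.continuous.measurable hM hu hu₂)
  simp only [hαβ.norm_sq_diracOp]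
  rw [integral_add hsum_int hcross_int, integral_add hu'_int hGu_int, hparts, sub_eq_add_neg]

theorem integral_norm_sq_deriv_add_norm_sq_smul_le :
    (∫ x, ‖deriv u x‖ ^ 2) + (∫ x, ‖G x • u x‖ ^ 2) ≤
      2 * (∫ x, ‖diracOp α β G u x‖ ^ 2) + C ^ 2 * ∫ x, ‖u x‖ ^ 2 := by
  have hu_int := hu₂.integrable_norm_pow two_ne_zero
  have hGu_int := (memLp_smul_of_abs_le hG.continuous hM hu₂).integrable_norm_pow two_ne_zero
  have hpointwise (x : ℝ) : deriv G x * cliffordForm α β (u x) (u x) ≤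
      1 / 2 * ‖G x • u x‖ ^ 2 + C ^ 2 / 2 * ‖u x‖ ^ 2 := by
    calc deriv G x * cliffordForm α β (u x) (u x)
        ≤ |deriv G x| * |cliffordForm α β (u x) (u x)| := (le_abs_self _).trans_eq (abs_mul _ _)
      _ ≤ C * |G x| * (‖u x‖ * ‖u x‖) :=
          mul_le_mul (hC x) (hαβ.abs_cliffordForm_le _ _) (abs_nonneg _)
            ((abs_nonneg _).trans (hC x))
      _ = ‖G x • u x‖ * (C * ‖u x‖) := by rw [norm_smul, Real.norm_eq_abs]; ring
      _ ≤ _ := by linarith [two_mul_le_add_sq ‖G x • u x‖ (C * ‖u x‖), mul_pow C ‖u x‖ 2]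
  have hcross : ∫ x, deriv G x * cliffordForm α β (u x) (u x) ≤
      1 / 2 * (∫ x, ‖G x • u x‖ ^ 2) + C ^ 2 / 2 * ∫ x, ‖u x‖ ^ 2 := by
    rw [← integral_const_mul, ← integral_const_mul,
      ← integral_add (hGu_int.const_mul _) (hu_int.const_mul _)]
    exact integral_mono (hαβ.integrable_deriv_mul_cliffordForm_self hM hC hu hu₂)
      ((hGu_int.const_mul _).add (hu_int.const_mul _)) hpointwise
  have hu'_nonneg : 0 ≤ ∫ x, ‖deriv u x‖ ^ 2 := integral_nonneg fun x => sq_nonneg _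
  linarith [hαβ.integral_norm_sq_diracOp hM hC hu hu₂ hG hu₂']

end IsCliffordPair

end Clifford

section OperatorCalculus

variable {Γ1 Γ2 : Matrix (Fin 4) (Fin 4) ℂ} {g f : ℝ → ℝ} {lam : ℝ} {jm : ℝ → ℝ} {S : ℝ}
  {φ : ℝ → ℝ} {v w : ℝ → V4} {x : ℝ}

theorem contDiff_Rm {n : WithTop ℕ∞} (hjm : ContDiff ℝ n jm) : ContDiff ℝ n (Rm jm S) :=
  ((hjm.comp (contDiff_id.div_const S)).pow 2).mul contDiff_id

theorem Dop_smul (hφ : DifferentiableAt ℝ φ x) (hv : DifferentiableAt ℝ v x) :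
    Dop (fun y => φ y • v y) x = φ x • Dop v x - (Complex.I * ((deriv φ x : ℝ) : ℂ)) • v x := by
  rw [Dop, Dop, deriv_fun_smul hφ hv]
  simp only [← Complex.coe_smul]
  module

theorem Dop_add (hv : DifferentiableAt ℝ v x) (hw : DifferentiableAt ℝ w x) :
    Dop (fun y => v y + w y) x = Dop v x + Dop w x := by
  rw [Dop, Dop, Dop, deriv_fun_add hv hw, smul_add]

theorem H0op_smul (hφ : DifferentiableAt ℝ φ x) (hv : DifferentiableAt ℝ v x) :
    H0op Γ1 Γ2 g f lam (fun y => φ y • v y) x =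
      φ x • H0op Γ1 Γ2 g f lam v x - (Complex.I * ((deriv φ x : ℝ) : ℂ)) • Mop Γ1 (v x) := by
  rw [H0op, H0op, Dop_smul hφ hv]
  simp only [map_sub, map_smul, ← Complex.coe_smul]
  module

theorem H0op_add (hv : DifferentiableAt ℝ v x) (hw : DifferentiableAt ℝ w x) :
    H0op Γ1 Γ2 g f lam (fun y => v y + w y) x =
      H0op Γ1 Γ2 g f lam v x + H0op Γ1 Γ2 g f lam w x := by
  simp only [H0op, Dop_add hv hw, map_add]
  module

theorem H0op_const_smul (c : ℂ) (hv : DifferentiableAt ℝ v x) :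
    H0op Γ1 Γ2 g f lam (fun y => c • v y) x = c • H0op Γ1 Γ2 g f lam v x := by
  simp only [H0op, Dop, deriv_fun_const_smul c hv, map_smul, ← Complex.coe_smul]
  module

theorem Amop_smul (hφ : DifferentiableAt ℝ φ x) (hv : DifferentiableAt ℝ v x) :
    Amop jm S (fun y => φ y • v y) x =
      φ x • Amop jm S v x - Complex.I • (Rm jm S x * deriv φ x) • v x := by
  rw [Amop, Amop, Dop_smul hφ hv]
  simp only [← Complex.coe_smul, Complex.ofReal_mul]
  module

theorem Amop_add (hv : DifferentiableAt ℝ v x) (hw : DifferentiableAt ℝ w x) :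
    Amop jm S (fun y => v y + w y) x = Amop jm S v x + Amop jm S w x := by
  simp only [Amop, Dop_add hv hw]
  module

theorem Amop_clm_apply {T : ℝ → V4 →L[ℂ] V4} (hT : DifferentiableAt ℝ T x)
    (hv : DifferentiableAt ℝ v x) :
    Amop jm S (fun y => T y (v y)) x =
      T x (Amop jm S v x) - (Complex.I * (Rm jm S x : ℂ)) • deriv T x (v x) := by
  simp only [Amop, Dop, (hasDerivAt_clm_apply_apply hT.hasDerivAt hv.hasDerivAt).deriv, map_sub,
    map_smul, ← Complex.coe_smul]
  module

theorem commH0Am_smul (hφ : DifferentiableAt ℝ φ x) (hv : DifferentiableAt ℝ v x) :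
    commH0Am Γ1 Γ2 g f lam jm S (fun y => φ y • v y) x =
      φ x • commH0Am Γ1 Γ2 g f lam jm S v x - (deriv (Rm jm S) x * deriv φ x) • Mop Γ1 (v x) := by
  rw [commH0Am, commH0Am, Dop_smul hφ hv]
  simp only [map_sub, map_smul, ← Complex.coe_smul, Complex.ofReal_mul]
  match_scalars <;> ring_nf
  rw [Complex.I_sq]
  ring

theorem commH0Am_eq_H0op :
    commH0Am Γ1 Γ2 g f lam jm S v x = (-Complex.I) •
      (deriv (Rm jm S) x • H0op Γ1 Γ2 g f lam v x
        - ((Complex.I / 2) * ((deriv (deriv (Rm jm S)) x : ℝ) : ℂ)) • Mop Γ1 (v x)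
        - (lam * (deriv (Rm jm S) x * g x + Rm jm S x * deriv g x)) • Mop Γ2 (v x)
        - (deriv (Rm jm S) x * f x + Rm jm S x * deriv f x) • v x) := by
  rw [commH0Am, H0op]
  module

theorem differentiable_Dop (hv : ContDiff ℝ 2 v) : Differentiable ℝ (Dop v) :=
  hv.differentiable_deriv_two.const_smul (-Complex.I)

theorem differentiable_Mop_apply (Γ : Matrix (Fin 4) (Fin 4) ℂ) (hv : Differentiable ℝ v) :
    Differentiable ℝ fun y => Mop Γ (v y) :=
  fun y => (hasDerivAt_clm_apply (Mop Γ) (hv y).hasDerivAt).differentiableAt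

theorem differentiable_H0op (hg : Differentiable ℝ g) (hf : Differentiable ℝ f)
    (hv : ContDiff ℝ 2 v) : Differentiable ℝ (H0op Γ1 Γ2 g f lam v) := by
  have hv' : Differentiable ℝ v := hv.differentiable two_ne_zero
  exact ((differentiable_Mop_apply Γ1 (differentiable_Dop hv)).add
    ((hg.const_mul lam).smul (differentiable_Mop_apply Γ2 hv'))).add (hf.smul hv')

theorem differentiable_Amop (hjm : ContDiff ℝ 2 jm) (hv : ContDiff ℝ 2 v) :
    Differentiable ℝ (Amop jm S v) := by
  have hR : ContDiff ℝ 2 (Rm jm S) := contDiff_Rm hjm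
  have hR' : Differentiable ℝ fun y => ((deriv (Rm jm S) y : ℝ) : ℂ) :=
    Complex.ofRealCLM.differentiable.comp hR.differentiable_deriv_two
  exact ((hR.differentiable two_ne_zero).smul (differentiable_Dop hv)).sub
    ((hR'.const_mul (Complex.I / 2)).smul (hv.differentiable two_ne_zero))

theorem Dop_H0op (hg : Differentiable ℝ g) (hf : Differentiable ℝ f) (hv : ContDiff ℝ 2 v) :
    Dop (H0op Γ1 Γ2 g f lam v) x = H0op Γ1 Γ2 g f lam (Dop v) x -
      Complex.I • ((lam * deriv g x) • Mop Γ2 (v x) + deriv f x • v x) := by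
  have hv' : Differentiable ℝ v := hv.differentiable two_ne_zero
  have hderiv : HasDerivAt (H0op Γ1 Γ2 g f lam v)
      (Mop Γ1 (deriv (Dop v) x) + ((lam * g x) • Mop Γ2 (deriv v x) +
        (lam * deriv g x) • Mop Γ2 (v x)) + (f x • deriv v x + deriv f x • v x)) x :=
    ((hasDerivAt_clm_apply (Mop Γ1) (differentiable_Dop hv x).hasDerivAt).add
      (((hg x).hasDerivAt.const_mul lam).smul
        (hasDerivAt_clm_apply (Mop Γ2) (hv' x).hasDerivAt))).add
      ((hf x).hasDerivAt.smul (hv' x).hasDerivAt)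
  rw [Dop, hderiv.deriv]
  simp only [H0op, Dop, map_smul, ← Complex.coe_smul]
  module

theorem H0op_Amop (hjm : ContDiff ℝ 2 jm) (hv : ContDiff ℝ 2 v) :
    H0op Γ1 Γ2 g f lam (Amop jm S v) x =
      Rm jm S x • H0op Γ1 Γ2 g f lam (Dop v) x
        - (Complex.I * ((deriv (Rm jm S) x : ℝ) : ℂ)) • Mop Γ1 (Dop v x)
        - (Complex.I / 2) • (deriv (Rm jm S) x • H0op Γ1 Γ2 g f lam v x
          - (Complex.I * ((deriv (deriv (Rm jm S)) x : ℝ) : ℂ)) • Mop Γ1 (v x)) := by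
  have hR : ContDiff ℝ 2 (Rm jm S) := contDiff_Rm hjm
  have hR₁ : Differentiable ℝ (Rm jm S) := hR.differentiable two_ne_zero
  have hR₂ : Differentiable ℝ (deriv (Rm jm S)) := hR.differentiable_deriv_two
  have hv' : Differentiable ℝ v := hv.differentiable two_ne_zero
  have hDv : Differentiable ℝ (Dop v) := differentiable_Dop hv
  have hA : Amop jm S v = fun y =>
      Rm jm S y • Dop v y + (-(Complex.I / 2)) • (deriv (Rm jm S) y • v y) := by
    funext y
    rw [Amop, ← Complex.coe_smul (deriv (Rm jm S) y)]
    module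
  rw [hA, H0op_add ((hR₁ x).fun_smul (hDv x)) (((hR₂ x).fun_smul (hv' x)).fun_const_smul _),
    H0op_const_smul _ ((hR₂ x).fun_smul (hv' x)), H0op_smul (hR₁ x) (hDv x),
    H0op_smul (hR₂ x) (hv' x)]
  module

theorem commH0Am_eq_commutator (hg : Differentiable ℝ g) (hf : Differentiable ℝ f)
    (hjm : ContDiff ℝ 2 jm) (hv : ContDiff ℝ 2 v) :
    commH0Am Γ1 Γ2 g f lam jm S v x =
      H0op Γ1 Γ2 g f lam (Amop jm S v) x - Amop jm S (H0op Γ1 Γ2 g f lam v) x := by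
  rw [H0op_Amop hjm hv, Amop, Dop_H0op hg hf hv, commH0Am]
  simp only [← Complex.coe_smul, Complex.ofReal_mul]
  match_scalars <;> ring_nf

theorem Bop_eq_commutator {h : ℝ → ℝ} {V : ℝ → Matrix (Fin 4) (Fin 4) ℂ} {u : ℝ → V4}
    (hg : Differentiable ℝ g) (hf : Differentiable ℝ f) (hjm : ContDiff ℝ 2 jm)
    (hh : ContDiff ℝ 2 h) (hV : Differentiable ℝ fun x => Mop (V x)) (hu : ContDiff ℝ 2 u) :
    Bop Γ1 Γ2 g f lam h V jm S u x =
      Hop Γ1 Γ2 g f lam h V (Amop jm S u) x - Amop jm S (Hop Γ1 Γ2 g f lam h V u) x := by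
  have hh₁ : Differentiable ℝ h := hh.differentiable two_ne_zero
  have hu₁ : Differentiable ℝ u := hu.differentiable two_ne_zero
  have hhu : ContDiff ℝ 2 fun y => h y • u y := hh.smul hu
  have hH₀ := differentiable_H0op (Γ1 := Γ1) (Γ2 := Γ2) (lam := lam) hg hf hhu
  have hRh' : Differentiable ℝ fun y => Rm jm S y * deriv h y :=
    ((contDiff_Rm hjm).differentiable two_ne_zero).mul hh.differentiable_deriv_two
  have hhA : (fun y => h y • Amop jm S u y) = fun y =>
      Amop jm S (fun z => h z • u z) y + Complex.I • ((Rm jm S y * deriv h y) • u y) := by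
    funext y
    rw [Amop_smul (hh₁ y) (hu₁ y), sub_add_cancel]
  have hAH : Amop jm S (Hop Γ1 Γ2 g f lam h V u) x =
      Amop jm S (fun y => h y • H0op Γ1 Γ2 g f lam (fun z => h z • u z) y) x +
        Amop jm S (fun y => Mop (V y) (u y)) x :=
    Amop_add ((hh₁ x).smul (hH₀ x)) 
      (hasDerivAt_clm_apply_apply (hV x).hasDerivAt (hu₁ x).hasDerivAt).differentiableAt
  rw [hAH, Amop_smul (hh₁ x) (hH₀ x), Amop_clm_apply (hV x) (hu₁ x), Hop, hhA,
    H0op_add (differentiable_Amop hjm hhu x) (((hRh' x).fun_smul (hu₁ x)).fun_const_smul _),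
    H0op_const_smul _ ((hRh' x).fun_smul (hu₁ x)), Bop, commH0Am_eq_commutator hg hf hjm hhu]
  simp only [← Complex.coe_smul, Complex.ofReal_mul]
  module

theorem Bop_eq_H0op {h : ℝ → ℝ} {V : ℝ → Matrix (Fin 4) (Fin 4) ℂ} {u : ℝ → V4}
    (hR : DifferentiableAt ℝ (Rm jm S) x) (hh : DifferentiableAt ℝ h x)
    (hh' : DifferentiableAt ℝ (deriv h) x) (hu : DifferentiableAt ℝ u x) :
    Bop Γ1 Γ2 g f lam h V jm S u x =
      h x ^ 2 • commH0Am Γ1 Γ2 g f lam jm S u x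
        + (2 * Complex.I) • (h x * (Rm jm S x * deriv h x)) • H0op Γ1 Γ2 g f lam u x
        + (h x * (Rm jm S x * deriv (deriv h) x) + Rm jm S x * deriv h x * deriv h x) •
            Mop Γ1 (u x)
        + Complex.I • Rm jm S x • deriv (fun y => Mop (V y)) x (u x) := by
  rw [Bop, commH0Am_smul hh hu, H0op_smul (hR.fun_mul hh') hu, H0op_smul hh hu,
    deriv_fun_mul hR hh']
  simp only [← Complex.coe_smul, Complex.ofReal_mul, Complex.ofReal_add, Complex.ofReal_pow]
  match_scalars <;> ring_nf
  rw [Complex.I_sq]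
  ring

end OperatorCalculus

section CutoffBounds

variable {jm : ℝ → ℝ} {S x : ℝ}

theorem exists_abs_le_of_eqOn_const {φ : ℝ → ℝ} (hφ : Continuous φ) {a b c d : ℝ}
    (ha : Set.EqOn φ (fun _ => c) (Set.Iio a)) (hb : Set.EqOn φ (fun _ => d) (Set.Ioi b)) :
    ∃ K, ∀ x, |φ x| ≤ K := by
  obtain ⟨K, hK⟩ := (isCompact_Icc (a := a) (b := b)).exists_bound_of_continuousOn hφ.continuousOn
  refine ⟨max K (max |c| |d|), fun x => ?_⟩
  rcases lt_or_ge x a with hxa | hxa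
  · exact (congrArg abs (ha hxa)).trans_le ((le_max_left _ _).trans (le_max_right _ _))
  rcases lt_or_ge b x with hxb | hxb
  · exact (congrArg abs (hb hxb)).trans_le ((le_max_right _ _).trans (le_max_right _ _))
  · exact (hK x ⟨hxa, hxb⟩).trans (le_max_left _ _)

theorem eqOn_Rm_id (hS : 0 < S) (hjm_one : ∀ t, t ≤ -2 → jm t = 1) :
    Set.EqOn (Rm jm S) id (Set.Iio (-2 * S)) := fun x hx => by
  rw [Rm, hjm_one _ ((div_le_iff₀ hS).2 hx.le), one_pow, one_mul, id]

theorem eqOn_Rm_zero (hS : 0 < S) (hjm_zero : ∀ t, -(3 / 2 : ℝ) ≤ t → jm t = 0) :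
    Set.EqOn (Rm jm S) (fun _ => 0) (Set.Ioi (-(3 / 2) * S)) := fun x hx => by
  rw [Rm, hjm_zero _ ((le_div_iff₀ hS).2 (Set.mem_Ioi.1 hx).le), zero_pow two_ne_zero, zero_mul]

theorem exists_abs_deriv_Rm_le (hS : 0 < S) (hjm : ContDiff ℝ 2 jm)
    (hjm_one : ∀ t, t ≤ -2 → jm t = 1) (hjm_zero : ∀ t, -(3 / 2 : ℝ) ≤ t → jm t = 0) :
    ∃ K, ∀ x, |deriv (Rm jm S) x| ≤ K ∧ |deriv (deriv (Rm jm S)) x| ≤ K := by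
  have hR : ContDiff ℝ 2 (Rm jm S) := contDiff_Rm hjm
  have hleft : Set.EqOn (deriv (Rm jm S)) (fun _ => 1) (Set.Iio (-2 * S)) := fun x hx => by
    rw [(eqOn_Rm_id hS hjm_one).deriv isOpen_Iio hx, deriv_id]
  have hright : Set.EqOn (deriv (Rm jm S)) (fun _ => 0) (Set.Ioi (-(3 / 2) * S)) := fun x hx => by
    rw [(eqOn_Rm_zero hS hjm_zero).deriv isOpen_Ioi hx, deriv_const]
  obtain ⟨K₁, hK₁⟩ := exists_abs_le_of_eqOn_const (hR.continuous_deriv one_le_two) hleft hright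
  obtain ⟨K₂, hK₂⟩ := exists_abs_le_of_eqOn_const
    (hR.iterate_deriv' 0 2).continuous
    ((hleft.deriv isOpen_Iio).trans fun x _ => deriv_const x 1)
    ((hright.deriv isOpen_Ioi).trans fun x _ => deriv_const x 0)
  exact ⟨max K₁ K₂, fun x => ⟨(hK₁ x).trans (le_max_left _ _), (hK₂ x).trans (le_max_right _ _)⟩⟩

theorem abs_Rm_mul_le (hS : 1 ≤ S) (hjm_range : ∀ t, jm t ∈ Set.Icc (0 : ℝ) 1)
    (hjm_zero : ∀ t, -(3 / 2 : ℝ) ≤ t → jm t = 0) {y C : ℝ} (hC : 0 ≤ C)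
    (hy : x ≤ -(3 / 2 : ℝ) → |x * y| ≤ C) : |Rm jm S x * y| ≤ C := by
  rcases le_or_gt x (-(3 / 2)) with hx | hx
  · have hjm_sq : |jm (x / S) ^ 2| ≤ 1 := by
      rw [abs_of_nonneg (sq_nonneg _)]
      exact pow_le_one₀ (hjm_range _).1 (hjm_range _).2
    rw [Rm, mul_assoc, abs_mul]
    exact (mul_le_of_le_one_left (abs_nonneg _) hjm_sq).trans (hy hx)
  · rw [eqOn_Rm_zero (by positivity) hjm_zero (Set.mem_Ioi.2 (by linarith)), zero_mul, abs_zero]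
    exact hC

end CutoffBounds

section PointwiseBounds

variable {Γ1 Γ2 : Matrix (Fin 4) (Fin 4) ℂ} {g f : ℝ → ℝ} {lam : ℝ} {jm : ℝ → ℝ} {S : ℝ}
  {u : ℝ → V4} {x : ℝ}

theorem isCliffordPair_Mop (hΓ1 : Γ1.IsHermitian) (hΓ2 : Γ2.IsHermitian) (hΓ1_sq : Γ1 * Γ1 = 1)
    (hΓ2_sq : Γ2 * Γ2 = 1) (hanticomm : Γ1 * Γ2 + Γ2 * Γ1 = 0) :
    IsCliffordPair (Mop Γ1) (Mop Γ2) where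
  isSelfAdjoint_left := hΓ1.isSelfAdjoint.map Matrix.toEuclideanCLM
  isSelfAdjoint_right := hΓ2.isSelfAdjoint.map Matrix.toEuclideanCLM
  mul_self_left := by rw [Mop, ← map_mul, hΓ1_sq, map_one]
  mul_self_right := by rw [Mop, ← map_mul, hΓ2_sq, map_one]
  anticomm := by rw [Mop, Mop, ← map_mul, ← map_mul, ← map_add, hanticomm, map_zero]

variable {K : ℝ}

theorem norm_commH0Am_le (hΓ : IsCliffordPair (Mop Γ1) (Mop Γ2)) {C2 C3 Mf : ℝ}
    (hR' : |deriv (Rm jm S) x| ≤ K) (hR'' : |deriv (deriv (Rm jm S)) x| ≤ K)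
    (hg' : |Rm jm S x * deriv g x| ≤ C2 * |g x|) (hf : |f x| ≤ Mf)
    (hf' : |Rm jm S x * deriv f x| ≤ C3) :
    ‖commH0Am Γ1 Γ2 g f lam jm S u x‖ ≤ K * ‖H0op Γ1 Γ2 g f lam u x‖ +
      (K + C2) * ‖(lam * g x) • u x‖ + (K + K * Mf + C3) * ‖u x‖ := by
  have hK : 0 ≤ K := (abs_nonneg _).trans hR'
  have hH₀ : ‖deriv (Rm jm S) x • H0op Γ1 Γ2 g f lam u x‖ ≤ K * ‖H0op Γ1 Γ2 g f lam u x‖ :=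
    (norm_smul _ _).trans_le (mul_le_mul_of_nonneg_right hR' (norm_nonneg _))
  have hΓ1u : ‖((Complex.I / 2) * ((deriv (deriv (Rm jm S)) x : ℝ) : ℂ)) • Mop Γ1 (u x)‖ ≤
      K * ‖u x‖ := by
    rw [norm_smul, hΓ.norm_left_apply, norm_mul, norm_div, Complex.norm_I, Complex.norm_two,
      Complex.norm_real, Real.norm_eq_abs]
    exact mul_le_mul_of_nonneg_right (by linarith) (norm_nonneg _)
  have hmass : |deriv (Rm jm S) x * g x + Rm jm S x * deriv g x| ≤ (K + C2) * |g x| := by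
    linarith [abs_add_le (deriv (Rm jm S) x * g x) (Rm jm S x * deriv g x),
      abs_mul (deriv (Rm jm S) x) (g x), mul_le_mul_of_nonneg_right hR' (abs_nonneg (g x))]
  have hΓ2u : ‖(lam * (deriv (Rm jm S) x * g x + Rm jm S x * deriv g x)) • Mop Γ2 (u x)‖ ≤
      (K + C2) * ‖(lam * g x) • u x‖ := by
    rw [norm_smul, norm_smul, hΓ.norm_right_apply, Real.norm_eq_abs, Real.norm_eq_abs, abs_mul,
      abs_mul]
    calc _ ≤ |lam| * ((K + C2) * |g x|) * ‖u x‖ := by gcongr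
      _ = _ := by ring
  have hfu : ‖(deriv (Rm jm S) x * f x + Rm jm S x * deriv f x) • u x‖ ≤
      (K * Mf + C3) * ‖u x‖ := by
    have hcoeff : |deriv (Rm jm S) x * f x + Rm jm S x * deriv f x| ≤ K * Mf + C3 :=
      (abs_add_le _ _).trans (add_le_add ((abs_mul _ _).trans_le
        (mul_le_mul hR' hf (abs_nonneg _) hK)) hf')
    exact (norm_smul _ _).trans_le (mul_le_mul_of_nonneg_right hcoeff (norm_nonneg _))
  rw [commH0Am_eq_H0op, norm_smul, norm_neg, Complex.norm_I, one_mul]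
  refine (norm_sub_le_of_le (norm_sub_le_of_le (norm_sub_le_of_le hH₀ hΓ1u) hΓ2u) hfu).trans ?_
  linarith

theorem norm_Bop_le (hΓ : IsCliffordPair (Mop Γ1) (Mop Γ2)) {h : ℝ → ℝ}
    {V : ℝ → Matrix (Fin 4) (Fin 4) ℂ} (hR : DifferentiableAt ℝ (Rm jm S) x)
    (hh : DifferentiableAt ℝ h x) (hh₂ : DifferentiableAt ℝ (deriv h) x)
    (hu : DifferentiableAt ℝ u x) {Ch Ch' C6 C7 C8 : ℝ} (hh_bdd : |h x| ≤ Ch)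
    (hh'_bdd : |deriv h x| ≤ Ch') (hRh' : |Rm jm S x * deriv h x| ≤ C6)
    (hRh'' : |Rm jm S x * deriv (deriv h) x| ≤ C7)
    (hRV' : |Rm jm S x * ‖deriv (fun y => Mop (V y)) x‖| ≤ C8) :
    ‖Bop Γ1 Γ2 g f lam h V jm S u x‖ ≤ Ch ^ 2 * ‖commH0Am Γ1 Γ2 g f lam jm S u x‖ +
      2 * (Ch * C6) * ‖H0op Γ1 Γ2 g f lam u x‖ + (Ch * C7 + C6 * Ch' + C8) * ‖u x‖ := by
  have hCh : 0 ≤ Ch := (abs_nonneg _).trans hh_bdd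
  have hC6 : 0 ≤ C6 := (abs_nonneg _).trans hRh'
  have hcomm : ‖h x ^ 2 • commH0Am Γ1 Γ2 g f lam jm S u x‖ ≤
      Ch ^ 2 * ‖commH0Am Γ1 Γ2 g f lam jm S u x‖ := by
    rw [norm_smul, norm_pow, Real.norm_eq_abs]
    gcongr
  have hH₀ : ‖(2 * Complex.I) • (h x * (Rm jm S x * deriv h x)) • H0op Γ1 Γ2 g f lam u x‖ ≤
      2 * (Ch * C6) * ‖H0op Γ1 Γ2 g f lam u x‖ := by
    rw [norm_smul, norm_smul, norm_mul, Complex.norm_two, Complex.norm_I, mul_one,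
      Real.norm_eq_abs, abs_mul, ← mul_assoc]
    gcongr
  have hΓ1u : ‖(h x * (Rm jm S x * deriv (deriv h) x) + Rm jm S x * deriv h x * deriv h x) •
      Mop Γ1 (u x)‖ ≤ (Ch * C7 + C6 * Ch') * ‖u x‖ := by
    rw [norm_smul, hΓ.norm_left_apply, Real.norm_eq_abs]
    refine mul_le_mul_of_nonneg_right ((abs_add_le _ _).trans ?_) (norm_nonneg _)
    rw [abs_mul (h x), abs_mul _ (deriv h x)]
    gcongr
  have hV'u : ‖Complex.I • Rm jm S x • deriv (fun y => Mop (V y)) x (u x)‖ ≤ C8 * ‖u x‖ := by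
    rw [abs_mul, abs_norm] at hRV'
    rw [norm_smul, norm_smul, Complex.norm_I, one_mul, Real.norm_eq_abs]
    calc _ ≤ |Rm jm S x| * (‖deriv (fun y => Mop (V y)) x‖ * ‖u x‖) := by
          gcongr; exact ContinuousLinearMap.le_opNorm _ _
      _ ≤ C8 * ‖u x‖ := by rw [← mul_assoc]; gcongr
  rw [Bop_eq_H0op hR hh hh₂ hu]
  refine (norm_add_le_of_le (norm_add_le_of_le (norm_add_le_of_le hcomm hH₀) hΓ1u) hV'u).trans ?_
  linarith

theorem exists_norm_Bop_le (hΓ : IsCliffordPair (Mop Γ1) (Mop Γ2)) {C2 C3 Mf : ℝ}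
    (hf : ∀ x, |f x| ≤ Mf) (hS : 1 ≤ S) (hjm : ContDiff ℝ 2 jm)
    (hjm_range : ∀ t, jm t ∈ Set.Icc (0 : ℝ) 1) (hjm_one : ∀ t, t ≤ -2 → jm t = 1)
    (hjm_zero : ∀ t, -(3 / 2 : ℝ) ≤ t → jm t = 0)
    (hxg' : ∀ x, x ≤ -(3 / 2 : ℝ) → |x * deriv g x| ≤ C2 * |g x|)
    (hxf' : ∀ x, x ≤ -(3 / 2 : ℝ) → |x * deriv f x| ≤ C3) {h : ℝ → ℝ} (hh : ContDiff ℝ 2 h)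
    {Ch Ch' C6 C7 C8 : ℝ} (hh_bdd : ∀ x, |h x| ≤ Ch) (hh'_bdd : ∀ x, |deriv h x| ≤ Ch')
    (hxh' : ∀ x, x ≤ -(3 / 2 : ℝ) → |x * deriv h x| ≤ C6)
    (hxh'' : ∀ x, x ≤ -(3 / 2 : ℝ) → |x * deriv (deriv h) x| ≤ C7)
    {V : ℝ → Matrix (Fin 4) (Fin 4) ℂ}
    (hxV' : ∀ x, x ≤ -(3 / 2 : ℝ) → |x| * ‖deriv (fun y => Mop (V y)) x‖ ≤ C8) :
    ∃ K > 0, ∀ (lam : ℝ) (u : ℝ → V4), Differentiable ℝ u → ∀ x,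
      ‖Bop Γ1 Γ2 g f lam h V jm S u x‖ ≤
        K * (‖H0op Γ1 Γ2 g f lam u x‖ + ‖(lam * g x) • u x‖ + ‖u x‖) := by
  obtain ⟨K, hK⟩ := exists_abs_deriv_Rm_le (by positivity) hjm hjm_one hjm_zero
  have hRm_mul_le {x y C : ℝ} := abs_Rm_mul_le (x := x) (y := y) (C := C) hS hjm_range hjm_zero
  refine ⟨max 1 (max (Ch ^ 2 * K + 2 * (Ch * C6)) (max (Ch ^ 2 * (K + |C2|))
    (Ch ^ 2 * (K + K * Mf + C3) + (Ch * C7 + C6 * Ch' + C8)))), by positivity,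
    fun lam u hu x => ?_⟩
  have hC2 {x : ℝ} : C2 * |g x| ≤ |C2| * |g x| :=
    mul_le_mul_of_nonneg_right (le_abs_self C2) (abs_nonneg _)
  have hcomm := norm_commH0Am_le (lam := lam) (u := u) hΓ (hK x).1 (hK x).2
    (hRm_mul_le (by positivity) fun hx => (hxg' x hx).trans hC2) (hf x)
    (hRm_mul_le ((abs_nonneg _).trans (hxf' _ le_rfl)) (hxf' x))
  have hB := norm_Bop_le (g := g) (f := f) (lam := lam) (V := V) hΓ
    ((contDiff_Rm hjm).differentiable two_ne_zero x) (hh.differentiable two_ne_zero x)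
    (hh.differentiable_deriv_two x) (hu x) (hh_bdd x) (hh'_bdd x)
    (hRm_mul_le ((abs_nonneg _).trans (hxh' _ le_rfl)) (hxh' x))
    (hRm_mul_le ((abs_nonneg _).trans (hxh'' _ le_rfl)) (hxh'' x))
    (hRm_mul_le ((by positivity : (0 : ℝ) ≤ _).trans (hxV' _ le_rfl)) fun hx => by
      rw [abs_mul, abs_norm]; exact hxV' x hx)
  set a := ‖H0op Γ1 Γ2 g f lam u x‖
  set b := ‖(lam * g x) • u x‖
  set c := ‖u x‖
  have hsum : ‖Bop Γ1 Γ2 g f lam h V jm S u x‖ ≤ (Ch ^ 2 * K + 2 * (Ch * C6)) * a +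
      Ch ^ 2 * (K + |C2|) * b + (Ch ^ 2 * (K + K * Mf + C3) + (Ch * C7 + C6 * Ch' + C8)) * c := by
    linarith [mul_le_mul_of_nonneg_left hcomm (sq_nonneg Ch)]
  refine hsum.trans ?_
  rw [mul_add _ (a + b) c, mul_add _ a b]
  refine add_le_add (add_le_add ?_ ?_) ?_ <;>
    exact mul_le_mul_of_nonneg_right (by simp only [le_sup_iff, le_refl, true_or, or_true])
      (norm_nonneg _)

end PointwiseBounds

theorem abs_const_mul_le (a : ℝ) {φ : ℝ → ℝ} {C : ℝ} (hφ : ∀ x, |φ x| ≤ C) (x : ℝ) :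
    |a * φ x| ≤ |a| * C :=
  (abs_mul a (φ x)).trans_le (mul_le_mul_of_nonneg_left (hφ x) (abs_nonneg a))

theorem H0op_eq_diracOp_add (Γ1 Γ2 : Matrix (Fin 4) (Fin 4) ℂ) (g f : ℝ → ℝ) (lam : ℝ)
    (u : ℝ → V4) (x : ℝ) : H0op Γ1 Γ2 g f lam u x =
      diracOp (Mop Γ1) (Mop Γ2) (fun y => lam * g y) u x + f x • u x :=
  rfl

section L2Bounds

theorem integral_norm_sq_le_of_norm_le {E : Type*} [NormedAddCommGroup E] {B u v w : ℝ → E} {K : ℝ}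
    (hu : MemLp u 2) (hv : MemLp v 2) (hw : MemLp w 2)
    (hB : ∀ x, ‖B x‖ ≤ K * (‖u x‖ + ‖v x‖ + ‖w x‖)) :
    ∫ x, ‖B x‖ ^ 2 ≤
      3 * K ^ 2 * ((∫ x, ‖u x‖ ^ 2) + (∫ x, ‖v x‖ ^ 2) + ∫ x, ‖w x‖ ^ 2) := by
  have hu_int := hu.integrable_norm_pow two_ne_zero
  have hv_int := hv.integrable_norm_pow two_ne_zero
  have hw_int := hw.integrable_norm_pow two_ne_zero
  have huv_int : Integrable fun x => ‖u x‖ ^ 2 + ‖v x‖ ^ 2 := hu_int.add hv_int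
  have hB_sq (x : ℝ) : ‖B x‖ ^ 2 ≤ 3 * K ^ 2 * (‖u x‖ ^ 2 + ‖v x‖ ^ 2 + ‖w x‖ ^ 2) := by
    have hthree (a b c : ℝ) : (a + b + c) ^ 2 ≤ 3 * (a ^ 2 + b ^ 2 + c ^ 2) := by
      linarith [two_mul_le_add_sq a b, two_mul_le_add_sq a c, two_mul_le_add_sq b c]
    calc ‖B x‖ ^ 2 ≤ (K * (‖u x‖ + ‖v x‖ + ‖w x‖)) ^ 2 :=
          pow_le_pow_left₀ (norm_nonneg _) (hB x) 2
      _ ≤ K ^ 2 * (3 * (‖u x‖ ^ 2 + ‖v x‖ ^ 2 + ‖w x‖ ^ 2)) := by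
          rw [mul_pow]; gcongr; exact hthree _ _ _
      _ = _ := by ring
  rw [← integral_add hu_int hv_int, ← integral_add huv_int hw_int, ← integral_const_mul]
  exact integral_mono_of_nonneg (.of_forall fun x => sq_nonneg _)
    ((huv_int.add hw_int).const_mul _) (.of_forall hB_sq)

theorem L2norm_le_sqrt_mul_add {u v w : ℝ → V4} {c : ℝ} (hc : 0 ≤ c)
    (h : ∫ x, ‖u x‖ ^ 2 ≤ c * ((∫ x, ‖v x‖ ^ 2) + ∫ x, ‖w x‖ ^ 2)) :
    L2norm u ≤ √c * (L2norm v + L2norm w) := by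
  have hsqrt {a b : ℝ} (ha : 0 ≤ a) (hb : 0 ≤ b) : √(a + b) ≤ √a + √b :=
    Real.sqrt_le_iff.2 ⟨by positivity, by
      rw [add_sq, Real.sq_sqrt ha, Real.sq_sqrt hb]
      linarith [mul_nonneg (Real.sqrt_nonneg a) (Real.sqrt_nonneg b)]⟩
  calc L2norm u ≤ √(c * ((∫ x, ‖v x‖ ^ 2) + ∫ x, ‖w x‖ ^ 2)) := Real.sqrt_le_sqrt h
    _ = √c * √((∫ x, ‖v x‖ ^ 2) + ∫ x, ‖w x‖ ^ 2) := Real.sqrt_mul hc _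
    _ ≤ √c * (L2norm v + L2norm w) := mul_le_mul_of_nonneg_left
        (hsqrt (integral_nonneg fun x => sq_nonneg _) (integral_nonneg fun x => sq_nonneg _))
        (Real.sqrt_nonneg c)

variable {Γ1 Γ2 : Matrix (Fin 4) (Fin 4) ℂ} {g f : ℝ → ℝ} {lam Cb Mf : ℝ} {u : ℝ → V4}
  (hg : Differentiable ℝ g) (hg_bdd : ∀ x, |g x| ≤ Cb) (hu₂ : MemLp u 2)

include hg hg_bdd hu₂

theorem memLp_mass_smul : MemLp (fun x => (lam * g x) • u x) 2 :=
  memLp_smul_of_abs_le (hg.continuous.const_mul lam) (abs_const_mul_le lam hg_bdd) hu₂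

variable (hf : Continuous f) (hf_bdd : ∀ x, |f x| ≤ Mf) (hu₂' : MemLp (deriv u) 2)

include hf hf_bdd hu₂'

theorem memLp_H0op : MemLp (H0op Γ1 Γ2 g f lam u) 2 :=
  (memLp_diracOp (Mop Γ1) (Mop Γ2) (hg.continuous.const_mul lam) (abs_const_mul_le lam hg_bdd)
    hu₂ hu₂').add (memLp_smul_of_abs_le hf hf_bdd hu₂)

variable {Cg : ℝ} (hΓ : IsCliffordPair (Mop Γ1) (Mop Γ2))
  (hg' : ∀ x, |deriv g x| ≤ Cg * |g x|) (hu : Differentiable ℝ u)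

include hΓ hg' hu

theorem integral_norm_sq_mass_smul_le :
    ∫ x, ‖(lam * g x) • u x‖ ^ 2 ≤ 4 * (∫ x, ‖H0op Γ1 Γ2 g f lam u x‖ ^ 2) +
      (4 * Mf ^ 2 + Cg ^ 2) * ∫ x, ‖u x‖ ^ 2 := by
  set W := diracOp (Mop Γ1) (Mop Γ2) (fun x => lam * g x) u
  have hG' (x : ℝ) : |deriv (fun y => lam * g y) x| ≤ Cg * |lam * g x| := by
    rw [deriv_const_mul_field, abs_mul, abs_mul, mul_left_comm]
    exact mul_le_mul_of_nonneg_left (hg' x) (abs_nonneg lam)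
  have henergy := hΓ.integral_norm_sq_deriv_add_norm_sq_smul_le (abs_const_mul_le lam hg_bdd) hG'
    hu hu₂ (hg.const_mul lam) hu₂'
  have hW (x : ℝ) : ‖W x‖ ^ 2 ≤
      2 * ‖H0op Γ1 Γ2 g f lam u x‖ ^ 2 + 2 * Mf ^ 2 * ‖u x‖ ^ 2 := by
    have hfu : ‖f x • u x‖ ≤ Mf * ‖u x‖ :=
      (norm_smul _ _).trans_le (mul_le_mul_of_nonneg_right (hf_bdd x) (norm_nonneg _))
    calc ‖W x‖ ^ 2 = ‖H0op Γ1 Γ2 g f lam u x - f x • u x‖ ^ 2 := by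
          rw [H0op_eq_diracOp_add, add_sub_cancel_right]
      _ ≤ (‖H0op Γ1 Γ2 g f lam u x‖ + Mf * ‖u x‖) ^ 2 := by
          gcongr; exact norm_sub_le_of_le le_rfl hfu
      _ ≤ 2 * (‖H0op Γ1 Γ2 g f lam u x‖ ^ 2 + (Mf * ‖u x‖) ^ 2) := add_sq_le
      _ = _ := by ring
  have hH₀_int := (memLp_H0op (Γ1 := Γ1) (Γ2 := Γ2) (lam := lam) hg hg_bdd hu₂ hf hf_bdd
    hu₂').integrable_norm_pow two_ne_zero
  have hu_int := hu₂.integrable_norm_pow two_ne_zero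
  have hW_int : ∫ x, ‖W x‖ ^ 2 ≤
      2 * (∫ x, ‖H0op Γ1 Γ2 g f lam u x‖ ^ 2) + 2 * Mf ^ 2 * ∫ x, ‖u x‖ ^ 2 := by
    rw [← integral_const_mul, ← integral_const_mul,
      ← integral_add (hH₀_int.const_mul _) (hu_int.const_mul _)]
    exact integral_mono_of_nonneg (.of_forall fun x => sq_nonneg _)
      ((hH₀_int.const_mul _).add (hu_int.const_mul _)) (.of_forall hW)
  have hu'_nonneg : 0 ≤ ∫ x, ‖deriv u x‖ ^ 2 := integral_nonneg fun x => sq_nonneg _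
  linarith

theorem L2norm_le_mul_graph_norm_of_norm_le {B : ℝ → V4} {K : ℝ}
    (hB : ∀ x, ‖B x‖ ≤ K * (‖H0op Γ1 Γ2 g f lam u x‖ + ‖(lam * g x) • u x‖ + ‖u x‖)) :
    L2norm B ≤ √(3 * K ^ 2 * (5 + 4 * Mf ^ 2 + Cg ^ 2)) *
      (L2norm (H0op Γ1 Γ2 g f lam u) + L2norm u) := by
  refine L2norm_le_sqrt_mul_add (by positivity) ?_
  have hmass := integral_norm_sq_mass_smul_le (lam := lam) hg hg_bdd hu₂ hf hf_bdd hu₂' hΓ hg' hu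
  have hB_int := integral_norm_sq_le_of_norm_le (memLp_H0op hg hg_bdd hu₂ hf hf_bdd hu₂')
    (memLp_mass_smul hg hg_bdd hu₂) hu₂ hB
  set I := ∫ x, ‖H0op Γ1 Γ2 g f lam u x‖ ^ 2
  set J := ∫ x, ‖u x‖ ^ 2
  have hI : 0 ≤ I := integral_nonneg fun x => sq_nonneg _
  have hJ : 0 ≤ J := integral_nonneg fun x => sq_nonneg _
  have hsum : I + (∫ x, ‖(lam * g x) • u x‖ ^ 2) + J ≤ (5 + 4 * Mf ^ 2 + Cg ^ 2) * (I + J) := by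
    linarith [mul_nonneg (by positivity : 0 ≤ 4 * Mf ^ 2 + Cg ^ 2) hI]
  exact hB_int.trans ((mul_le_mul_of_nonneg_left hsum (by positivity)).trans_eq
    (mul_assoc _ _ _).symm)

end L2Bounds

theorem abs_mul_le_abs_sq_mul {x y : ℝ} (hx : 1 ≤ |x|) : |x * y| ≤ |x ^ 2 * y| := by
  rw [abs_mul, abs_mul, abs_pow]
  exact mul_le_mul_of_nonneg_right (le_self_pow₀ hx two_ne_zero) (abs_nonneg y)

theorem memLp_deriv_schwartzMap {E : Type*} [NormedAddCommGroup E] [NormedSpace ℝ E]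
    (u : SchwartzMap ℝ E) : MemLp (deriv u) 2 := by
  have hu' : ⇑(SchwartzMap.derivCLM ℝ E u) = deriv u := by
    ext x
    exact SchwartzMap.derivCLM_apply ℝ u x
  exact hu' ▸ (SchwartzMap.derivCLM ℝ E u).memLp 2

theorem commutator_H_Aminus_bounded_general
    (Γ1 Γ2 : Matrix (Fin 4) (Fin 4) ℂ)
    (hΓ1_herm : Γ1.IsHermitian) (hΓ2_herm : Γ2.IsHermitian)
    (hΓ1_sq : Γ1 * Γ1 = 1) (hΓ2_sq : Γ2 * Γ2 = 1)
    (hanticomm : Γ1 * Γ2 + Γ2 * Γ1 = 0)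
    (g : ℝ → ℝ) (hg : Differentiable ℝ g) (Cb : ℝ) (hg_bdd : ∀ x, |g x| ≤ Cb)
    (Cg : ℝ) (hg' : ∀ x, |deriv g x| ≤ Cg * |g x|)
    (f : ℝ → ℝ) (hf : Differentiable ℝ f) (Mf : ℝ) (hf_bdd : ∀ x, |f x| ≤ Mf)
    (S : ℝ) (hS : 1 ≤ S)
    (jm : ℝ → ℝ) (hjm : ContDiff ℝ 2 jm) (hjm_range : ∀ t, jm t ∈ Set.Icc (0 : ℝ) 1)
    (hjm_one : ∀ t, t ≤ -2 → jm t = 1) (hjm_zero : ∀ t, -(3 / 2 : ℝ) ≤ t → jm t = 0)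
    (C2 : ℝ) (hxg' : ∀ x, x ≤ -(3 / 2 : ℝ) → |x * deriv g x| ≤ C2 * |g x|)
    (C3 : ℝ) (hxf' : ∀ x, x ≤ -(3 / 2 : ℝ) → |x * deriv f x| ≤ C3)
    (h : ℝ → ℝ) (hh : ContDiff ℝ 2 h) (Ch : ℝ) (hh_bdd : ∀ x, |h x| ≤ Ch)
    (Ch' : ℝ) (hh'_bdd : ∀ x, |deriv h x| ≤ Ch')
    (C6 : ℝ) (hxh' : ∀ x, x ≤ -(3 / 2 : ℝ) → |x * deriv h x| ≤ C6)
    (C7 : ℝ) (hxh'' : ∀ x, x ≤ -(3 / 2 : ℝ) → |x * deriv (deriv h) x| ≤ C7)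
    (V : ℝ → Matrix (Fin 4) (Fin 4) ℂ) (hV : Differentiable ℝ fun x => Mop (V x))
    (C8 : ℝ)
    (hxV' : ∀ x, x ≤ -(3 / 2 : ℝ) → |x| * ‖deriv (fun y => Mop (V y)) x‖ ≤ C8) :
    (∀ (lam : ℝ) (u : ℝ → V4), ContDiff ℝ 2 u → ∀ x,
      Bop Γ1 Γ2 g f lam h V jm S u x =
        Hop Γ1 Γ2 g f lam h V (Amop jm S u) x - Amop jm S (Hop Γ1 Γ2 g f lam h V u) x) ∧
    ∃ c : ℝ, 0 < c ∧ ∀ (lam : ℝ) (u : ℝ → V4), Differentiable ℝ u → MemLp u 2 →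
      MemLp (deriv u) 2 →
      L2norm (Bop Γ1 Γ2 g f lam h V jm S u) ≤
        c * (L2norm (H0op Γ1 Γ2 g f lam u) + L2norm u) := by
  refine ⟨fun lam u hu x => Bop_eq_commutator hg hf hjm hh hV hu, ?_⟩
  have hΓ := isCliffordPair_Mop hΓ1_herm hΓ2_herm hΓ1_sq hΓ2_sq hanticomm
  obtain ⟨K, hK, hB⟩ := exists_norm_Bop_le hΓ hf_bdd hS hjm hjm_range hjm_one hjm_zero hxg' hxf' hh
    hh_bdd hh'_bdd hxh' hxh'' hxV'
  exact ⟨√(3 * K ^ 2 * (5 + 4 * Mf ^ 2 + Cg ^ 2)), by positivity, fun lam u hu hu₂ hu₂' =>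
    L2norm_le_mul_graph_norm_of_norm_le hg hg_bdd hu₂ hf.continuous hf_bdd hu₂' hΓ hg' hu
      (hB lam u hu)⟩

/-- for the perturbed Hamiltonian `H = hH₀h + V`, the operator `B` coincides
with the commutator `[H, A₋] = HA₋ − A₋H` on Schwartz functions, and `B` is bounded by the
graph norm of `H₀` uniformly in `λ ≥ 1`. -/
theorem commutator_H_Aminus_bounded
    (Γ1 Γ2 : Matrix (Fin 4) (Fin 4) ℂ)
    (hΓ1_herm : Γ1.IsHermitian) (hΓ2_herm : Γ2.IsHermitian)
    (hΓ1_sq : Γ1 * Γ1 = 1) (hΓ2_sq : Γ2 * Γ2 = 1)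
    (hanticomm : Γ1 * Γ2 + Γ2 * Γ1 = 0)
    (g : ℝ → ℝ) (hg_smooth : ContDiff ℝ (⊤ : ℕ∞) g) (Cb : ℝ) (hg_bdd : ∀ x : ℝ, |g x| ≤ Cb)
    (Cg : ℝ) (hCg : 0 < Cg) (hg' : ∀ x : ℝ, |deriv g x| ≤ Cg * |g x|)
    (f : ℝ → ℝ) (hf_smooth : ContDiff ℝ (⊤ : ℕ∞) f)
    (Mf : ℝ) (hf_bdd : ∀ x : ℝ, |f x| ≤ Mf)
    (Mf' : ℝ) (hf'_bdd : ∀ x : ℝ, |deriv f x| ≤ Mf')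
    (S : ℝ) (hS : 1 ≤ S)
    (jm : ℝ → ℝ) (hjm_smooth : ContDiff ℝ (⊤ : ℕ∞) jm)
    (hjm_range : ∀ t : ℝ, jm t ∈ Set.Icc (0 : ℝ) 1)
    (hjm_one : ∀ t : ℝ, t ≤ -2 → jm t = 1)
    (hjm_zero : ∀ t : ℝ, -(3 / 2 : ℝ) ≤ t → jm t = 0)
    (C2 : ℝ) (hC2 : 0 < C2)
    (hxg' : ∀ x : ℝ, x ≤ -(3 / 2 : ℝ) → |x * deriv g x| ≤ C2 * |g x|)
    (C3 : ℝ) (hC3 : 0 < C3)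
    (hxf' : ∀ x : ℝ, x ≤ -(3 / 2 : ℝ) → |x * deriv f x| ≤ C3)
    (h : ℝ → ℝ) (hh_smooth : ContDiff ℝ (⊤ : ℕ∞) h) (hh_pos : ∀ x : ℝ, 0 < h x)
    (Ch : ℝ) (hh_bdd : ∀ x : ℝ, |h x| ≤ Ch)
    (Chinv : ℝ) (hhinv_bdd : ∀ x : ℝ, |1 / h x| ≤ Chinv)
    (Ch' : ℝ) (hh'_bdd : ∀ x : ℝ, |deriv h x| ≤ Ch')
    (Ch'' : ℝ) (hh''_bdd : ∀ x : ℝ, |deriv (deriv h) x| ≤ Ch'')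
    (C6 : ℝ) (hxh' : ∀ x : ℝ, x ≤ -(3 / 2 : ℝ) → |x * deriv h x| ≤ C6)
    (C7 : ℝ) (hx2h'' : ∀ x : ℝ, x ≤ -(3 / 2 : ℝ) → |x ^ 2 * deriv (deriv h) x| ≤ C7)
    (V : ℝ → Matrix (Fin 4) (Fin 4) ℂ) (hV_herm : ∀ x : ℝ, (V x).IsHermitian)
    (hV_C1 : ContDiff ℝ 1 fun x => Mop (V x))
    (CV : ℝ) (hV_bdd : ∀ x : ℝ, ‖Mop (V x)‖ ≤ CV)
    (C8 : ℝ)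
    (hxV' : ∀ x : ℝ, x ≤ -(3 / 2 : ℝ) → |x| * ‖deriv (fun y => Mop (V y)) x‖ ≤ C8) :
    (∀ (lam : ℝ), 1 ≤ lam → ∀ (u : SchwartzMap ℝ V4) (x : ℝ),
      Bop Γ1 Γ2 g f lam h V jm S ⇑u x =
        Hop Γ1 Γ2 g f lam h V (Amop jm S ⇑u) x
          - Amop jm S (Hop Γ1 Γ2 g f lam h V ⇑u) x) ∧
    ∃ c : ℝ, 0 < c ∧ ∀ (lam : ℝ), 1 ≤ lam → ∀ u : SchwartzMap ℝ V4,
      L2norm (Bop Γ1 Γ2 g f lam h V jm S ⇑u) ≤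
        c * (L2norm (H0op Γ1 Γ2 g f lam ⇑u) + L2norm ⇑u) := by
  obtain ⟨hcomm, c, hc, hbound⟩ := commutator_H_Aminus_bounded_general Γ1 Γ2 hΓ1_herm hΓ2_herm
    hΓ1_sq hΓ2_sq hanticomm g (hg_smooth.differentiable (by simp)) Cb hg_bdd Cg hg' f
    (hf_smooth.differentiable (by simp)) Mf hf_bdd S hS jm (contDiff_infty.1 hjm_smooth 2)
    hjm_range hjm_one hjm_zero C2 hxg' C3 hxf' h (contDiff_infty.1 hh_smooth 2) Ch hh_bdd Ch'
    hh'_bdd C6 hxh' C7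
    (fun x hx => (abs_mul_le_abs_sq_mul (le_abs.2 (.inr (by linarith)))).trans (hx2h'' x hx)) V
    (hV_C1.differentiable one_ne_zero) C8 hxV'
  exact ⟨fun lam _ u => hcomm lam u (u.smooth 2), c, hc, fun lam _ u =>
    hbound lam u u.differentiable (u.memLp 2) (memLp_deriv_schwartzMap u)⟩
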